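/- arXiv:2312.01704 — 2 statements merged into one kernel-verified Lean document; each statement's English description precedes it below -/
import Mathlib

section
/- If x, z ∈ σᵢ(D), dᵢ(x,z) < r(x), and z' ∈ σⱼ⁻¹(z) for some j ∈ I, then there exists x' ∈ σⱼ⁻¹(x) such that d[l^{(j)}](x', z') = dᵢ(x, z). -/
noncomputable section

open Set
open scoped ENNReal

/-- The Euclidean plane `ℝ²` with the Euclidean metric. -/
abbrev E2 : Type := EuclideanSpace ℝ (Fin 2)

/-- Vertices of the fixed closed regular (equilateral) triangle of side length 1. -/
def p0 : E2 := !₂[0, 0]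
def p1 : E2 := !₂[1, 0]
def p2 : E2 := !₂[1 / 2, Real.sqrt 3 / 2]

/-- `Dtri` is the fixed closed regular triangle in `ℝ²` with edge length 1. -/
def Dtri : Set E2 := convexHull ℝ {p0, p1, p2}

/-- `V0` is the set of the three vertices of `Dtri`. -/
def V0 : Set E2 := {p0, p1, p2}

/-- The three closed edges of `Dtri`. -/
def e01 : Set E2 := segment ℝ p0 p1
def e12 : Set E2 := segment ℝ p1 p2
def e02 : Set E2 := segment ℝ p0 p2

/-- `E0` is the set of the three closed edges of `Dtri`. -/
def E0 : Set (Set E2) := {e01, e12, e02}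

/-- The open edge `e° = e ∖ V₀`. -/
def eo (e : Set E2) : Set E2 := e \ V0

/-- `Do = D°` is the interior of `Dtri` in `ℝ²`. -/
def Do : Set E2 := interior Dtri

/-- `l : E₀ → ℝ` is positive and satisfies the strict triangle inequalities:
`l e₁ + l e₂ > l e₃` whenever `{e₁, e₂, e₃} = E₀`. -/
def TriIneq (l : Set E2 → ℝ) : Prop :=
  (∀ e ∈ E0, 0 < l e) ∧
  ∀ e₁ e₂ e₃ : Set E2, ({e₁, e₂, e₃} : Set (Set E2)) = E0 → l e₁ + l e₂ > l e₃

/-- A linear map `f : ℝ² → ℝ²` realizes the edge lengths `l`, i.e. for each `e ∈ E₀`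
the segment `f(e)` has Euclidean length `l e`. -/
def Realizes (f : E2 →ₗ[ℝ] E2) (l : Set E2 → ℝ) : Prop :=
  dist (f p0) (f p1) = l e01 ∧ dist (f p1) (f p2) = l e12 ∧ dist (f p0) (f p2) = l e02

/-- The metric `d[l]` on `Dtri`, defined by `d[l](x,y) = |f x - f y|₂` for a linear map `f`
realizing the edge lengths `l` (this is independent of the choice of `f`). -/
def dD (l : Set E2 → ℝ) (x y : E2) : ℝ :=
  letI := Classical.propDecidable (∃ f : E2 →ₗ[ℝ] E2, Realizes f l)
  if h : ∃ f : E2 →ₗ[ℝ] E2, Realizes f l then dist (h.choose x) (h.choose y) else 0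

/-- A triangulation `T = (σᵢ)_{i ∈ I}`, `I = Fin n`, of a topological space `S`:
a finite family of continuous maps `σᵢ : Dtri → S` such that
(a) `σᵢ` is injective on each open edge, (b) `σᵢ` is injective on `D°`,
(c) `S` is the disjoint union of `⋃ᵢ σᵢ(V₀)`, the sets `σᵢ(D°)`, and the distinct sets
among the `σᵢ(e°)`, and (d) glued edges are identified by a linear homeomorphism. -/
structure Triangulation (S : Type) [TopologicalSpace S] (n : ℕ) where
  σ : Fin n → E2 → S
  continuousOn : ∀ i, ContinuousOn (σ i) Dtri
  inj_edge : ∀ i, ∀ e ∈ E0, InjOn (σ i) (eo e)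
  inj_int : ∀ i, InjOn (σ i) Do
  cover : (⋃ i, σ i '' V0) ∪ (⋃ i, σ i '' Do) ∪ (⋃ i, ⋃ e ∈ E0, σ i '' eo e) = univ
  disj_int : ∀ i j, i ≠ j → Disjoint (σ i '' Do) (σ j '' Do)
  disj_vert_int : ∀ j, Disjoint (⋃ i, σ i '' V0) (σ j '' Do)
  disj_vert_edge : ∀ j, ∀ e ∈ E0, Disjoint (⋃ i, σ i '' V0) (σ j '' eo e)
  disj_int_edge : ∀ i j, ∀ e ∈ E0, Disjoint (σ i '' Do) (σ j '' eo e)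
  edge_eq_or_disjoint : ∀ i j, ∀ e ∈ E0, ∀ e' ∈ E0,
    σ i '' eo e = σ j '' eo e' ∨ Disjoint (σ i '' eo e) (σ j '' eo e')
  glue : ∀ i j, ∀ e ∈ E0, ∀ e' ∈ E0, σ i '' eo e = σ j '' eo e' →
    ∃ A : E2 →ᵃ[ℝ] E2, A '' e = e' ∧ ∀ x ∈ e, σ j (A x) = σ i x

variable {S : Type} [TopologicalSpace S] {n : ℕ}

/-- `l ∈ ℝ^{E(T)}_Δ`: `l` assigns positive lengths to the edges of `T` satisfying the
strict triangle inequalities in each triangle. -/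
def TriIneqT (T : Triangulation S n) (l : Set S → ℝ) : Prop :=
  (∀ (i : Fin n), ∀ e ∈ E0, 0 < l (T.σ i '' e)) ∧
  ∀ (i : Fin n), ∀ e₁ e₂ e₃ : Set E2, ({e₁, e₂, e₃} : Set (Set E2)) = E0 →
    l (T.σ i '' e₁) + l (T.σ i '' e₂) > l (T.σ i '' e₃)

/-- The restricted edge lengths `l^{(i)}` on the triangle `σᵢ(D)`: `l^{(i)}_e = l_{σᵢ(e)}`. -/
def lRes (T : Triangulation S n) (l : Set S → ℝ) (i : Fin n) : Set E2 → ℝ :=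
  fun e => l (T.σ i '' e)

/-- `dᵢ(x,y) = min { d[l^{(i)}](x',y') : x' ∈ σᵢ⁻¹(x), y' ∈ σᵢ⁻¹(y) }` for `x, y ∈ σᵢ(D)`. -/
def dTri (T : Triangulation S n) (l : Set S → ℝ) (i : Fin n) (x y : S) : ℝ :=
  sInf { r | ∃ x' ∈ Dtri, ∃ y' ∈ Dtri,
    T.σ i x' = x ∧ T.σ i y' = y ∧ r = dD (lRes T l i) x' y' }

/-- The set of sums `Σ_j d_{i_j}(x_{j-1}, x_j)` over chains from `x` to `y`. -/
def chainSums (T : Triangulation S n) (l : Set S → ℝ) (x y : S) : Set ℝ :=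
  { r | ∃ (k : ℕ) (c : ℕ → S) (idx : ℕ → Fin n),
      c 0 = x ∧ c k = y ∧
      (∀ j < k, c j ∈ T.σ (idx j) '' Dtri ∧ c (j + 1) ∈ T.σ (idx j) '' Dtri) ∧
      r = ∑ j ∈ Finset.range k, dTri T l (idx j) (c j) (c (j + 1)) }

/-- The glued metric `d[l]` on `S`. -/
def dGlue (T : Triangulation S n) (l : Set S → ℝ) (x y : S) : ℝ :=
  sInf (chainSums T l x y)

/-- `K(x)`: the union of the edges of `Dtri` not containing `x`. -/
def Kset (x : E2) : Set E2 := ⋃₀ {e ∈ E0 | x ∉ e}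

/-- The distance from `x` to `K(x)` in `(Dtri, d[l'])`. -/
def rObs (l' : Set E2 → ℝ) (x : E2) : ℝ := sInf { r | ∃ y ∈ Kset x, r = dD l' x y }

/-- `r(x) = min { rᵢ(x') : i ∈ I, x' ∈ σᵢ⁻¹(x) }` for `x ∈ S`. -/
def rS (T : Triangulation S n) (l : Set S → ℝ) (x : S) : ℝ :=
  sInf { r | ∃ i : Fin n, ∃ x' ∈ Dtri, T.σ i x' = x ∧ r = rObs (lRes T l i) x' }

/-! ### Auxiliary facts -/

theorem aux_dD_spec (l : Set E2 → ℝ) :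
    (∃ f : E2 →ₗ[ℝ] E2, Realizes f l ∧ ∀ x y, dD l x y = dist (f x) (f y)) ∨
    (∀ x y, dD l x y = 0) := by
  by_cases h : ∃ f : E2 →ₗ[ℝ] E2, Realizes f l
  · left
    refine ⟨h.choose, h.choose_spec, fun x y => ?_⟩
    simp only [dD, dif_pos h]
  · right
    intro x y
    simp only [dD, dif_neg h]

theorem aux_dD_nonneg (l : Set E2 → ℝ) (x y : E2) : 0 ≤ dD l x y := by
  rcases aux_dD_spec l with ⟨f, -, hf⟩ | h
  · rw [hf]; exact dist_nonneg
  · rw [h]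

theorem aux_dD_self (l : Set E2 → ℝ) (x : E2) : dD l x x = 0 := by
  rcases aux_dD_spec l with ⟨f, -, hf⟩ | h
  · rw [hf]; exact dist_self _
  · rw [h]

theorem aux_dD_continuous (l : Set E2 → ℝ) :
    Continuous (fun p : E2 × E2 => dD l p.1 p.2) := by
  rcases aux_dD_spec l with ⟨f, -, hf⟩ | h
  · simp only [hf]
    have hc : Continuous f := f.continuous_of_finiteDimensional
    exact (hc.comp continuous_fst).dist (hc.comp continuous_snd)
  · simp only [h]; exact continuous_const

theorem aux_rObs_nonneg (l : Set E2 → ℝ) (x : E2) : 0 ≤ rObs l x := by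
  apply Real.sInf_nonneg
  rintro r ⟨y, -, rfl⟩
  exact aux_dD_nonneg _ _ _

theorem aux_rObs_le (l : Set E2 → ℝ) (x y : E2) (hy : y ∈ Kset x) : rObs l x ≤ dD l x y := by
  apply csInf_le
  · refine ⟨0, ?_⟩
    rintro r ⟨y, -, rfl⟩
    exact aux_dD_nonneg _ _ _
  · exact ⟨y, hy, rfl⟩

theorem aux_rObs_zero (l : Set E2 → ℝ) (h : ∀ x y, dD l x y = 0) (x : E2) : rObs l x ≤ 0 := by
  apply Real.sInf_nonpos
  rintro r ⟨y, -, rfl⟩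
  exact (h _ _).le

theorem aux_rS_le (T : Triangulation S n) (l : Set S → ℝ) (i : Fin n) (x : S) (x' : E2)
    (hD : x' ∈ Dtri) (hx : T.σ i x' = x) : rS T l x ≤ rObs (lRes T l i) x' := by
  apply csInf_le
  · refine ⟨0, ?_⟩
    rintro r ⟨i, y, -, -, rfl⟩
    exact aux_rObs_nonneg _ _
  · exact ⟨i, x', hD, hx, rfl⟩

theorem aux_sqrt3 : 0 < Real.sqrt 3 := Real.sqrt_pos.mpr (by norm_num)

theorem aux_of_mem_Dtri (x : E2) (hx : x ∈ Dtri) :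
    0 ≤ x 1 ∧ x 1 ≤ Real.sqrt 3 * x 0 ∧ x 1 ≤ Real.sqrt 3 * (1 - x 0) := by
  have h3 := aux_sqrt3
  have hc : Convex ℝ {x : E2 | 0 ≤ x 1 ∧ x 1 ≤ Real.sqrt 3 * x 0 ∧
      x 1 ≤ Real.sqrt 3 * (1 - x 0)} := by
    rintro x ⟨hx1, hx2, hx3⟩ y ⟨hy1, hy2, hy3⟩ a b ha hb hab
    simp only [Set.mem_ofPred_eq, PiLp.add_apply, PiLp.smul_apply, smul_eq_mul]
    obtain rfl : b = 1 - a := by linarith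
    refine ⟨by positivity, ?_, ?_⟩
    · linarith [mul_le_mul_of_nonneg_left hx2 ha, mul_le_mul_of_nonneg_left hy2 hb]
    · linarith [mul_le_mul_of_nonneg_left hx3 ha, mul_le_mul_of_nonneg_left hy3 hb]
  refine convexHull_min ?_ hc hx
  rintro y (rfl | rfl | rfl)
  · simp [p0]
  · simp [p1]
  · refine ⟨?_, ?_, ?_⟩ <;> simp only [p2, PiLp.toLp_apply, Matrix.cons_val_zero,
      Matrix.cons_val_one] <;> linarith

theorem aux_mem_Dtri (x : E2) (h1 : 0 ≤ x 1) (h2 : x 1 ≤ Real.sqrt 3 * x 0)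
    (h3 : x 1 ≤ Real.sqrt 3 * (1 - x 0)) : x ∈ Dtri := by
  have hs := aux_sqrt3
  have hss : Real.sqrt 3 * Real.sqrt 3 = 3 := Real.mul_self_sqrt (by norm_num)
  have hd : x 1 / Real.sqrt 3 * Real.sqrt 3 = x 1 := by field_simp
  have hd0 : 0 ≤ x 1 / Real.sqrt 3 := by positivity
  have hb : 0 ≤ x 0 - x 1 / Real.sqrt 3 := by
    rw [sub_nonneg, div_le_iff₀ hs]; linarith
  have ha : 0 ≤ 1 - x 0 - x 1 / Real.sqrt 3 := by
    rw [sub_nonneg, div_le_iff₀ hs]; linarith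
  have key : x = ∑ k : Fin 3, (![1 - x 0 - x 1 / Real.sqrt 3, x 0 - x 1 / Real.sqrt 3,
      2 * (x 1 / Real.sqrt 3)] k) • (![p0, p1, p2] k) := by
    ext k
    fin_cases k
    · simp [Fin.sum_univ_three, p0, p1, p2]; ring
    · simp [Fin.sum_univ_three, p0, p1, p2]
      field_simp
  rw [key]
  refine (convex_convexHull ℝ _).sum_mem ?_ ?_ ?_
  · intro k _
    fin_cases k
    · simpa using ha
    · simpa using hb
    · simpa using hd0
  · simp [Fin.sum_univ_three]; ring
  · intro k _
    apply subset_convexHull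
    fin_cases k <;> simp

theorem aux_mem_Do (x : E2) (h1 : 0 < x 1) (h2 : x 1 < Real.sqrt 3 * x 0)
    (h3 : x 1 < Real.sqrt 3 * (1 - x 0)) : x ∈ Do := by
  have hopen : IsOpen {x : E2 | 0 < x 1 ∧ x 1 < Real.sqrt 3 * x 0 ∧
      x 1 < Real.sqrt 3 * (1 - x 0)} := by
    have c0 : Continuous (fun x : E2 => x 0) := by fun_prop
    have c1 : Continuous (fun x : E2 => x 1) := by fun_prop
    exact (isOpen_lt continuous_const c1).inter
      ((isOpen_lt c1 (continuous_const.mul c0)).inter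
        (isOpen_lt c1 (continuous_const.mul (continuous_const.sub c0))))
  refine interior_maximal ?_ hopen (show x ∈ {x : E2 | _} from ⟨h1, h2, h3⟩)
  rintro y ⟨hy1, hy2, hy3⟩
  exact aux_mem_Dtri y hy1.le hy2.le hy3.le

theorem aux_cases (x : E2) (hx : x ∈ Dtri) : x ∈ V0 ∨ x ∈ Do ∨ ∃ e ∈ E0, x ∈ eo e := by
  by_cases hV : x ∈ V0
  · exact Or.inl hV
  right
  by_cases hDo : x ∈ Do
  · exact Or.inl hDo
  right
  have hs := aux_sqrt3
  obtain ⟨h1, h2, h3⟩ := aux_of_mem_Dtri x hx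
  have hxle : 0 ≤ x 0 := by
    by_contra h; push Not at h; nlinarith
  have hxle' : x 0 ≤ 1 := by
    by_contra h; push Not at h; nlinarith
  by_cases g1 : 0 < x 1
  · by_cases g2 : x 1 < Real.sqrt 3 * x 0
    · by_cases g3 : x 1 < Real.sqrt 3 * (1 - x 0)
      · exact absurd (aux_mem_Do x g1 g2 g3) hDo
      · have g : x 1 = Real.sqrt 3 * (1 - x 0) := le_antisymm h3 (not_lt.mp g3)
        have hh : 1 / 2 ≤ x 0 := by
          by_contra h; push Not at h; nlinarith
        refine ⟨e12, by simp [E0], ?_, hV⟩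
        refine ⟨2 * x 0 - 1, 2 * (1 - x 0), by linarith, by linarith, by ring, ?_⟩
        ext k
        fin_cases k
        · simp [p1, p2]; ring
        · simp [p1, p2, g]; ring
    · have g : x 1 = Real.sqrt 3 * x 0 := le_antisymm h2 (not_lt.mp g2)
      have hh : x 0 ≤ 1 / 2 := by
        by_contra h; push Not at h; nlinarith
      refine ⟨e02, by simp [E0], ?_, hV⟩
      refine ⟨1 - 2 * x 0, 2 * x 0, by linarith, by linarith, by ring, ?_⟩
      ext k
      fin_cases k
      · simp [p0, p2]; ring
      · simp [p0, p2, g]; ring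
  · have g : x 1 = 0 := le_antisymm (not_lt.mp g1) h1
    refine ⟨e01, by simp [E0], ?_, hV⟩
    refine ⟨1 - x 0, x 0, by linarith, by linarith, by ring, ?_⟩
    ext k
    fin_cases k
    · simp [p0, p1]
    · simp [p0, p1, g]

theorem aux_e01 (x : E2) (h : x ∈ e01) : x 1 = 0 := by
  obtain ⟨a, b, -, -, -, rfl⟩ := h
  simp [p0, p1]

theorem aux_e02 (x : E2) (h : x ∈ e02) : x 1 = Real.sqrt 3 * x 0 := by
  obtain ⟨a, b, -, -, -, rfl⟩ := h
  simp [p0, p2]; ring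

theorem aux_e12 (x : E2) (h : x ∈ e12) : x 1 = Real.sqrt 3 * (1 - x 0) := by
  obtain ⟨a, b, -, -, hab, rfl⟩ := h
  obtain rfl : a = 1 - b := by linarith
  simp [p1, p2]; ring

theorem aux_vertex (v x : E2) (hv : v ∈ V0) (h : ∀ e ∈ E0, v ∈ e → x ∈ e) : x = v := by
  have hs := aux_sqrt3
  rcases hv with rfl | rfl | rfl
  · have h1 := aux_e01 x (h e01 (by simp [E0]) (left_mem_segment ℝ _ _))
    have h2 := aux_e02 x (h e02 (by simp [E0]) (left_mem_segment ℝ _ _))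
    have h0 : x 0 = 0 := by
      rw [h1] at h2
      rcases mul_eq_zero.mp h2.symm with h | h
      · exact absurd h hs.ne'
      · exact h
    ext k
    fin_cases k
    · simpa [p0] using h0
    · simpa [p0] using h1
  · have h1 := aux_e01 x (h e01 (by simp [E0]) (right_mem_segment ℝ _ _))
    have h2 := aux_e12 x (h e12 (by simp [E0]) (left_mem_segment ℝ _ _))
    have h0 : x 0 = 1 := by
      rw [h1] at h2
      rcases mul_eq_zero.mp h2.symm with h | h
      · exact absurd h hs.ne'
      · linarith
    ext k
    fin_cases k
    · simpa [p1] using h0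
    · simpa [p1] using h1
  · have h1 := aux_e02 x (h e02 (by simp [E0]) (right_mem_segment ℝ _ _))
    have h2 := aux_e12 x (h e12 (by simp [E0]) (right_mem_segment ℝ _ _))
    have h0 : x 0 = 1 / 2 := by
      have := mul_left_cancel₀ hs.ne' (h1.symm.trans h2)
      linarith
    ext k
    fin_cases k
    · simpa [p2] using h0
    · simp [p2, h1, h0]; ring

theorem aux_edge (e : Set E2) (he : e ∈ E0) : ∃ a b : E2, e = segment ℝ a b ∧
    a ∈ V0 ∧ b ∈ V0 ∧
    ∀ (f : E2 →ₗ[ℝ] E2) (l : Set E2 → ℝ), Realizes f l → dist (f a) (f b) = l e := by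
  rcases he with rfl | rfl | rfl
  · exact ⟨p0, p1, rfl, by simp [V0], by simp [V0], fun f l h => h.1⟩
  · exact ⟨p1, p2, rfl, by simp [V0], by simp [V0], fun f l h => h.2.1⟩
  · exact ⟨p0, p2, rfl, by simp [V0], by simp [V0], fun f l h => h.2.2⟩

theorem aux_edge_subset (e : Set E2) (he : e ∈ E0) : e ⊆ Dtri := by
  obtain ⟨a, b, rfl, ha, hb, -⟩ := aux_edge e he
  exact (convex_convexHull ℝ _).segment_subset (subset_convexHull ℝ _ ha)
    (subset_convexHull ℝ _ hb)

theorem aux_dist_le (a b u v : E2) (hu : u ∈ segment ℝ a b) (hv : v ∈ segment ℝ a b) :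
    dist u v ≤ dist a b := by
  rw [segment_eq_image_lineMap] at hu hv
  obtain ⟨s, hs, rfl⟩ := hu
  obtain ⟨t, ht, rfl⟩ := hv
  rw [dist_lineMap_lineMap]
  have h : dist s t ≤ 1 := by
    rw [Real.dist_eq, abs_le]
    constructor <;> linarith [hs.1, hs.2, ht.1, ht.2]
  exact mul_le_of_le_one_left dist_nonneg h

theorem aux_dist_eq (a b u v : E2) (h : segment ℝ a b = segment ℝ u v) :
    dist a b = dist u v :=
  le_antisymm
    (aux_dist_le u v a b (h ▸ left_mem_segment ℝ a b) (h ▸ right_mem_segment ℝ a b))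
    (aux_dist_le a b u v (h ▸ left_mem_segment ℝ u v) (h ▸ right_mem_segment ℝ u v))

theorem aux_glue_dist (e e' : Set E2) (he : e ∈ E0) (he' : e' ∈ E0) (A : E2 →ᵃ[ℝ] E2)
    (hA : A '' e = e') (f g : E2 →ₗ[ℝ] E2) (l l' : Set E2 → ℝ) (hf : Realizes f l)
    (hg : Realizes g l') (hll : l e = l' e') (x z : E2) (hx : x ∈ e) (hz : z ∈ e) :
    dist (g (A x)) (g (A z)) = dist (f x) (f z) := by
  obtain ⟨a, b, rfl, -, -, hab⟩ := aux_edge e he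
  obtain ⟨a', b', rfl, -, -, hab'⟩ := aux_edge e' he'
  have h1 : segment ℝ (A a) (A b) = segment ℝ a' b' := by
    rw [← hA, image_segment]
  have h2 : segment ℝ (g (A a)) (g (A b)) = segment ℝ (g a') (g b') := by
    have e1 := image_segment ℝ g.toAffineMap (A a) (A b)
    have e2 := image_segment ℝ g.toAffineMap a' b'
    rw [h1] at e1
    exact e1.symm.trans e2
  have h3 : dist (g (A a)) (g (A b)) = dist (f a) (f b) := by
    rw [aux_dist_eq _ _ _ _ h2, hab' g l' hg, hab f l hf, hll]
  rw [segment_eq_image_lineMap] at hx hz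
  obtain ⟨s, -, rfl⟩ := hx
  obtain ⟨t, -, rfl⟩ := hz
  have hfl : ∀ r : ℝ, f (AffineMap.lineMap a b r) = AffineMap.lineMap (f a) (f b) r :=
    fun r => f.toAffineMap.apply_lineMap a b r
  have hgl : ∀ r : ℝ, g (A (AffineMap.lineMap a b r)) =
      AffineMap.lineMap (g (A a)) (g (A b)) r := fun r => by
    rw [A.apply_lineMap]
    exact g.toAffineMap.apply_lineMap (A a) (A b) r
  rw [hfl, hfl, hgl, hgl, dist_lineMap_lineMap, dist_lineMap_lineMap, h3]

theorem aux_attain [T2Space S] (T : Triangulation S n) (l : Set S → ℝ) (i : Fin n) (x z : S)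
    (hx : x ∈ T.σ i '' Dtri) (hz : z ∈ T.σ i '' Dtri) :
    ∃ x' ∈ Dtri, ∃ y' ∈ Dtri, T.σ i x' = x ∧ T.σ i y' = z ∧
      dTri T l i x z = dD (lRes T l i) x' y' := by
  have hD : IsCompact Dtri := by
    apply Set.Finite.isCompact_convexHull
    simp
  have hF : ∀ y : S, IsCompact (Dtri ∩ T.σ i ⁻¹' {y}) := fun y =>
    hD.of_isClosed_subset
      ((T.continuousOn i).preimage_isClosed_of_isClosed hD.isClosed isClosed_singleton)
      inter_subset_left
  have hS : {r | ∃ x' ∈ Dtri, ∃ y' ∈ Dtri,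
      T.σ i x' = x ∧ T.σ i y' = z ∧ r = dD (lRes T l i) x' y'} =
      (fun p : E2 × E2 => dD (lRes T l i) p.1 p.2) ''
        ((Dtri ∩ T.σ i ⁻¹' {x}) ×ˢ (Dtri ∩ T.σ i ⁻¹' {z})) := by
    ext r
    constructor
    · rintro ⟨x', hx', y', hy', h1, h2, rfl⟩
      exact ⟨(x', y'), ⟨⟨hx', h1⟩, ⟨hy', h2⟩⟩, rfl⟩
    · rintro ⟨⟨x', y'⟩, ⟨⟨hx', h1⟩, ⟨hy', h2⟩⟩, rfl⟩
      exact ⟨x', hx', y', hy', h1, h2, rfl⟩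
  have hcomp : IsCompact {r | ∃ x' ∈ Dtri, ∃ y' ∈ Dtri,
      T.σ i x' = x ∧ T.σ i y' = z ∧ r = dD (lRes T l i) x' y'} := by
    rw [hS]
    exact ((hF x).prod (hF z)).image (aux_dD_continuous _)
  obtain ⟨x', hx', h1⟩ := hx
  obtain ⟨y', hy', h2⟩ := hz
  exact hcomp.sInf_mem ⟨_, x', hx', y', hy', h1, h2, rfl⟩

/-- Lemma 3.2: if `x, z ∈ σᵢ(D)`, `dᵢ(x,z) < r(x)`, and `z' ∈ σⱼ⁻¹(z)`,
then there exists `x' ∈ σⱼ⁻¹(x)` with `d[l^{(j)}](x', z') = dᵢ(x, z)`. -/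
theorem exists_preimage_realizing_dTri
    {S : Type} [TopologicalSpace S] [CompactSpace S] [T2Space S] [ConnectedSpace S]
    {n : ℕ} (T : Triangulation S n) (l : Set S → ℝ) (hl : TriIneqT T l)
    (i j : Fin n) (x z : S)
    (hx : x ∈ T.σ i '' Dtri) (hz : z ∈ T.σ i '' Dtri)
    (hlt : dTri T l i x z < rS T l x)
    (z' : E2) (hz'D : z' ∈ Dtri) (hz' : T.σ j z' = z) :
    ∃ x' ∈ Dtri, T.σ j x' = x ∧ dD (lRes T l j) x' z' = dTri T l i x z := by
  obtain ⟨x0, hx0D, z0, hz0D, hx0, hz0, hd⟩ := aux_attain T l i x z hx hz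
  have hK : ∀ e ∈ E0, z0 ∈ e → x0 ∈ e := by
    intro e he hze
    by_contra hxe
    have h1 := aux_rObs_le (lRes T l i) x0 z0 ⟨e, ⟨he, hxe⟩, hze⟩
    have h2 := aux_rS_le T l i x x0 hx0D hx0
    linarith
  have hpos : 0 < rS T l x := lt_of_le_of_lt (hd ▸ aux_dD_nonneg _ _ _) hlt
  rcases aux_cases z0 hz0D with hV | hI | ⟨e, he, hze⟩
  · have hxz := aux_vertex z0 x0 hV hK
    subst hxz
    refine ⟨z', hz'D, by rw [hz', ← hz0, hx0], ?_⟩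
    rw [hd, aux_dD_self, aux_dD_self]
  · have hzI : z ∈ T.σ i '' Do := ⟨z0, hI, hz0⟩
    rcases aux_cases z' hz'D with hV' | hI' | ⟨e', he', hze'⟩
    · exact absurd hzI (disjoint_left.mp (T.disj_vert_int i)
        (mem_iUnion.mpr ⟨j, z', hV', hz'⟩))
    · have hij : i = j := by
        by_contra hne
        exact disjoint_left.mp (T.disj_int i j hne) hzI ⟨z', hI', hz'⟩
      subst hij
      have hzz : z' = z0 := T.inj_int i hI' hI (hz'.trans hz0.symm)
      subst hzz
      exact ⟨x0, hx0D, hx0, hd.symm⟩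
    · exact absurd ⟨z', hze', hz'⟩ (disjoint_left.mp (T.disj_int_edge i j e' he') hzI)
  · have hzE : z ∈ T.σ i '' eo e := ⟨z0, hze, hz0⟩
    rcases aux_cases z' hz'D with hV' | hI' | ⟨e', he', hze'⟩
    · exact absurd hzE (disjoint_left.mp (T.disj_vert_edge i e he)
        (mem_iUnion.mpr ⟨j, z', hV', hz'⟩))
    · exact absurd hzE (disjoint_left.mp (T.disj_int_edge j i e he) ⟨z', hI', hz'⟩)
    · have heq : T.σ i '' eo e = T.σ j '' eo e' := by
        rcases T.edge_eq_or_disjoint i j e he e' he' with h | h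
        · exact h
        · exact absurd ⟨z', hze', hz'⟩ (disjoint_left.mp h hzE)
      obtain ⟨A, hA, hAσ⟩ := T.glue i j e he e' he' heq
      have hx0e : x0 ∈ e := hK e he hze.1
      have hAx : A x0 ∈ e' := hA ▸ mem_image_of_mem A hx0e
      have hAz : A z0 ∈ e' := hA ▸ mem_image_of_mem A hze.1
      have hσz : T.σ j (A z0) = z := (hAσ z0 hze.1).trans hz0
      have hσx : T.σ j (A x0) = x := (hAσ x0 hx0e).trans hx0
      have hAzo : A z0 ∈ eo e' := by
        refine ⟨hAz, fun hAV => ?_⟩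
        exact disjoint_left.mp (T.disj_vert_edge i e he)
          (mem_iUnion.mpr ⟨j, A z0, hAV, hσz⟩) hzE
      have hzz : A z0 = z' := T.inj_edge j e' he' hAzo hze' (hσz.trans hz'.symm)
      have hAxD := aux_edge_subset e' he' hAx
      refine ⟨A x0, hAxD, hσx, ?_⟩
      have hll : lRes T l i e = lRes T l j e' := by
        have : T.σ i '' e = T.σ j '' e' := by
          rw [← hA, image_image]
          exact (image_congr hAσ).symm
        simp only [lRes, this]
      rw [hd, ← hzz]
      rcases aux_dD_spec (lRes T l i) with ⟨f, hf, hfd⟩ | h0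
      · rcases aux_dD_spec (lRes T l j) with ⟨g, hg, hgd⟩ | h0
        · rw [hfd, hgd]
          exact aux_glue_dist e e' he he' A hA f g _ _ hf hg hll x0 z0 hx0e hze.1
        · have h1 := aux_rObs_zero _ h0 (A x0)
          have h2 := aux_rS_le T l j x (A x0) hAxD hσx
          linarith
      · have h1 := aux_rObs_zero _ h0 x0
        have h2 := aux_rS_le T l i x x0 hx0D hx0
        linarith
end
end

section
/- If x, z, w ∈ σᵢ(D) and dᵢ(x,z) < r(x), then dᵢ(x,z) + dᵢ(z,w) ≥ dᵢ(x,w). -/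
noncomputable section

open Set
open scoped ENNReal

variable {S : Type} [TopologicalSpace S] {n : ℕ}

theorem dD_cases (l' : Set E2 → ℝ) :
    (∃ f : E2 →ₗ[ℝ] E2, Realizes f l' ∧ ∀ x y, dD l' x y = dist (f x) (f y)) ∨
      ∀ x y, dD l' x y = 0 := by
  by_cases h : ∃ f : E2 →ₗ[ℝ] E2, Realizes f l'
  · left
    refine ⟨h.choose, h.choose_spec, fun x y => ?_⟩
    unfold dD
    rw [dif_pos h]
  · right
    intro x y
    unfold dD
    rw [dif_neg h]

theorem dD_nonneg (l' : Set E2 → ℝ) (x y : E2) : 0 ≤ dD l' x y := by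
  rcases dD_cases l' with ⟨f, -, h⟩ | h
  · rw [h]; exact dist_nonneg
  · rw [h]

theorem dD_triangle (l' : Set E2 → ℝ) (x y z : E2) : dD l' x z ≤ dD l' x y + dD l' y z := by
  rcases dD_cases l' with ⟨f, -, h⟩ | h
  · simp only [h]; exact dist_triangle _ _ _
  · simp only [h]; norm_num

theorem diam_seg (a b : E2) : Metric.diam (segment ℝ a b) = dist a b := by
  rw [← convexHull_pair, convexHull_diam, Metric.diam_pair]

theorem image_seg (f : E2 →ₗ[ℝ] E2) (a b : E2) : f '' segment ℝ a b = segment ℝ (f a) (f b) :=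
  image_segment ℝ f.toAffineMap a b

theorem realizes_diam {f : E2 →ₗ[ℝ] E2} {l' : Set E2 → ℝ} (h : Realizes f l')
    {e : Set E2} (he : e ∈ E0) : Metric.diam (f '' e) = l' e := by
  obtain ⟨h1, h2, h3⟩ := h
  rcases he with rfl | rfl | rfl
  · rw [← h1, ← diam_seg, ← image_seg]; rfl
  · rw [← h2, ← diam_seg, ← image_seg]; rfl
  · rw [← h3, ← diam_seg, ← image_seg]; rfl

theorem edge_seg {e : Set E2} (he : e ∈ E0) : ∃ a b, e = segment ℝ a b := by
  rcases he with rfl | rfl | rfl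
  exacts [⟨_, _, rfl⟩, ⟨_, _, rfl⟩, ⟨_, _, rfl⟩]

theorem dD_isom (l' : Set E2 → ℝ) {e e' : Set E2} (he : e ∈ E0) (he' : e' ∈ E0)
    (hl : l' e = l' e') (A : E2 →ᵃ[ℝ] E2) (hA : A '' e = e') {x z : E2} (hx : x ∈ e)
    (hz : z ∈ e) : dD l' (A x) (A z) = dD l' x z := by
  rcases dD_cases l' with ⟨f, hf, h⟩ | h
  · obtain ⟨a, b, rfl⟩ := edge_seg he
    have h1 := realizes_diam hf he
    have h2 := realizes_diam hf he'
    rw [← hA, image_segment, image_seg, diam_seg] at h2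
    rw [image_seg, diam_seg] at h1
    rw [← image_segment, hA] at h2
    rw [segment_eq_image_lineMap] at hx hz
    obtain ⟨s, -, rfl⟩ := hx
    obtain ⟨t, -, rfl⟩ := hz
    have key : ∀ g : E2 →ᵃ[ℝ] E2, dist (g (AffineMap.lineMap a b s)) (g (AffineMap.lineMap a b t))
        = dist s t * dist (g a) (g b) := by
      intro g
      rw [AffineMap.apply_lineMap, AffineMap.apply_lineMap, dist_lineMap_lineMap]
    rw [h, h]
    have k1 := key f.toAffineMap
    have k2 := key (f.toAffineMap.comp A)
    simp only [AffineMap.comp_apply, LinearMap.coe_toAffineMap] at k1 k2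
    rw [k1, k2, h1, h2, hl]
  · rw [h, h]

theorem p0_mem {x : E2} (h1 : x ∈ e01) (h2 : x ∈ e02) : x = p0 := by
  obtain ⟨a, b, -, -, hab, rfl⟩ := h1
  obtain ⟨c, d, -, -, hcd, h⟩ := h2
  have hh1 := congrArg (fun v : E2 => v 1) h
  have s3 : (0:ℝ) < √3 := by positivity
  simp [p0, p1, p2] at hh1
  have hh0 := congrArg (fun v : E2 => v 0) h
  simp [p0, p1, p2, hh1] at hh0
  have : a = 1 := by linarith
  simp [this, ← hh0]

theorem p1_mem {x : E2} (h1 : x ∈ e01) (h2 : x ∈ e12) : x = p1 := by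
  obtain ⟨a, b, -, -, hab, rfl⟩ := h1
  obtain ⟨c, d, -, -, hcd, h⟩ := h2
  have hh1 := congrArg (fun v : E2 => v 1) h
  simp [p0, p1, p2] at hh1
  have hh0 := congrArg (fun v : E2 => v 0) h
  simp [p0, p1, p2, hh1] at hh0
  have : b = 1 := by linarith
  have : a = 0 := by linarith
  simp [*]

theorem p2_mem {x : E2} (h1 : x ∈ e02) (h2 : x ∈ e12) : x = p2 := by
  obtain ⟨a, b, -, -, hab, rfl⟩ := h1
  obtain ⟨c, d, -, -, hcd, h⟩ := h2
  have s3 : (0:ℝ) < √3 := by positivity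
  have hh1 := congrArg (fun v : E2 => v 1) h
  simp [p0, p1, p2] at hh1
  have hh0 := congrArg (fun v : E2 => v 0) h
  simp [p0, p1, p2, hh1] at hh0
  have : b = 1 := by linarith
  have : a = 0 := by linarith
  simp [*]

theorem Dtri_mem {x : E2} : x ∈ Dtri ↔ ∃ a b c : ℝ, 0 ≤ a ∧ 0 ≤ b ∧ 0 ≤ c ∧ a + b + c = 1 ∧
    a • p0 + b • p1 + c • p2 = x := by
  unfold Dtri
  constructor
  · intro h
    rw [convexHull_insert (by simp), convexHull_pair] at h
    simp only [convexJoin_singleton_left, mem_iUnion] at h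
    obtain ⟨y, ⟨c, d, hc, hd, hcd, rfl⟩, ⟨s, t, hs, ht, hst, rfl⟩⟩ := h
    refine ⟨s, t * c, t * d, hs, by positivity, by positivity, ?_, ?_⟩
    · linear_combination t * hcd + hst
    · simp only [smul_add, smul_smul, add_assoc]
  · rintro ⟨a, b, c, ha, hb, hc, habc, rfl⟩
    have h := (convex_convexHull ℝ ({p0, p1, p2} : Set E2)).sum_mem
      (t := Finset.univ) (w := ![a, b, c]) (z := ![p0, p1, p2]) ?_ ?_ ?_
    · simpa [Fin.sum_univ_three] using h
    · intro i _; fin_cases i <;> simpa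
    · simpa [Fin.sum_univ_three] using habc
    · intro i _
      apply subset_convexHull
      fin_cases i <;> simp

theorem Dtri_cases {x : E2} (hx : x ∈ Dtri) : x ∈ Do ∨ ∃ e ∈ E0, x ∈ e := by
  obtain ⟨a, b, c, ha, hb, hc, habc, rfl⟩ := Dtri_mem.1 hx
  have s3 : (0:ℝ) < √3 := by positivity
  rcases ha.eq_or_lt with rfl | ha
  · right
    exact ⟨e12, by simp [E0], b, c, hb, hc, by linarith, by simp⟩
  rcases hb.eq_or_lt with rfl | hb
  · right
    exact ⟨e02, by simp [E0], a, c, ha.le, hc, by linarith, by simp⟩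
  rcases hc.eq_or_lt with rfl | hc
  · right
    exact ⟨e01, by simp [E0], a, b, ha.le, hb.le, by linarith, by simp⟩
  left
  let U : Set E2 := {v | 0 < v 1 ∧ 0 < v 0 - v 1 / √3 ∧ 0 < 1 - v 0 - v 1 / √3}
  have hU : IsOpen U := by
    have q1 : IsOpen {v : E2 | 0 < v 1} := isOpen_lt (by fun_prop) (by fun_prop)
    have q2 : IsOpen {v : E2 | 0 < v 0 - v 1 / √3} := isOpen_lt (by fun_prop) (by fun_prop)
    have q3 : IsOpen {v : E2 | 0 < 1 - v 0 - v 1 / √3} := isOpen_lt (by fun_prop) (by fun_prop)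
    exact q1.inter (q2.inter q3)
  have hUD : U ⊆ Dtri := by
    rintro v ⟨h1, h2, h3⟩
    refine Dtri_mem.2 ⟨1 - v 0 - v 1 / √3, v 0 - v 1 / √3, 2 * v 1 / √3, h3.le, h2.le,
      by positivity, by ring, ?_⟩
    ext k
    fin_cases k
    · simp [p0, p1, p2]; ring
    · simp [p0, p1, p2]; field_simp
  refine interior_maximal hUD hU ?_
  refine ⟨?_, ?_, ?_⟩
  · simp [p0, p1, p2]; positivity
  · simp [p0, p1, p2]; field_simp; linarith
  · simp [p0, p1, p2]; field_simp; linarith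

theorem rS_le (T : Triangulation S n) (l : Set S → ℝ) (i : Fin n) {x' y : E2}
    (hx' : x' ∈ Dtri) (hy : y ∈ Kset x') : rS T l (T.σ i x') ≤ dD (lRes T l i) x' y := by
  have h0 : ∀ (l' : Set E2 → ℝ) x, 0 ≤ rObs l' x := by
    intro l' x
    apply Real.sInf_nonneg
    rintro _ ⟨y, -, rfl⟩
    exact dD_nonneg _ _ _
  calc rS T l (T.σ i x') ≤ rObs (lRes T l i) x' := by
        apply csInf_le
        · refine ⟨0, ?_⟩
          rintro _ ⟨j, x, -, -, rfl⟩
          exact h0 _ _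
        · exact ⟨i, x', hx', rfl, rfl⟩
    _ ≤ _ := by
        apply csInf_le
        · refine ⟨0, ?_⟩
          rintro _ ⟨j, -, rfl⟩
          exact dD_nonneg _ _ _
        · exact ⟨y, hy, rfl⟩

theorem edge_sub {e : Set E2} (he : e ∈ E0) : e ⊆ Dtri := by
  rcases he with rfl | rfl | rfl
  all_goals
    refine (convex_convexHull ℝ _).segment_subset ?_ ?_ <;>
      exact subset_convexHull ℝ _ (by simp)

theorem dTri_le (T : Triangulation S n) (l : Set S → ℝ) (i : Fin n) {x' y' : E2}
    (hx : x' ∈ Dtri) (hy : y' ∈ Dtri) :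
    dTri T l i (T.σ i x') (T.σ i y') ≤ dD (lRes T l i) x' y' := by
  apply csInf_le
  · refine ⟨0, ?_⟩
    rintro _ ⟨_, -, _, -, -, -, rfl⟩
    exact dD_nonneg _ _ _
  · exact ⟨x', hx, y', hy, rfl, rfl, rfl⟩

theorem dTri_nonneg (T : Triangulation S n) (l : Set S → ℝ) (i : Fin n) (x y : S) :
    0 ≤ dTri T l i x y := by
  apply Real.sInf_nonneg
  rintro _ ⟨_, -, _, -, -, -, rfl⟩
  exact dD_nonneg _ _ _

theorem dTri_approx (T : Triangulation S n) (l : Set S → ℝ) (i : Fin n) {x y : S}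
    (hx : x ∈ T.σ i '' Dtri) (hy : y ∈ T.σ i '' Dtri) {r : ℝ} (hr : dTri T l i x y < r) :
    ∃ x' ∈ Dtri, ∃ y' ∈ Dtri, T.σ i x' = x ∧ T.σ i y' = y ∧ dD (lRes T l i) x' y' < r := by
  obtain ⟨x', hx', h1⟩ := hx
  obtain ⟨y', hy', h2⟩ := hy
  have hne : { r | ∃ x' ∈ Dtri, ∃ y' ∈ Dtri,
      T.σ i x' = x ∧ T.σ i y' = y ∧ r = dD (lRes T l i) x' y' }.Nonempty :=
    ⟨_, x', hx', y', hy', h1, h2, rfl⟩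
  obtain ⟨_, ⟨a, ha, b, hb, h3, h4, rfl⟩, h⟩ := exists_lt_of_csInf_lt hne hr
  exact ⟨a, ha, b, hb, h3, h4, h⟩

/-- Any preimage `z''` of `z` is as close to a preimage of `x` as `z'` is. -/
theorem lift_pt (T : Triangulation S n) (l : Set S → ℝ) (i : Fin n) {x' z' z'' : E2}
    (hx' : x' ∈ Dtri) (hz' : z' ∈ Dtri) (hz'' : z'' ∈ Dtri) (hz : T.σ i z'' = T.σ i z')
    (hne : T.σ i x' ≠ T.σ i z')
    (hlt : dD (lRes T l i) x' z' < rS T l (T.σ i x')) :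
    ∃ x'' ∈ Dtri, T.σ i x'' = T.σ i x' ∧
      dD (lRes T l i) x'' z'' = dD (lRes T l i) x' z' := by
  have hmem : ∀ e ∈ E0, z' ∈ e → x' ∈ e := by
    intro e he hze
    by_contra hxe
    exact absurd hlt (not_lt.2 (rS_le T l i hx' ⟨e, ⟨he, hxe⟩, hze⟩))
  have m01 : e01 ∈ E0 := by simp [E0]
  have m12 : e12 ∈ E0 := by simp [E0]
  have m02 : e02 ∈ E0 := by simp [E0]
  have hV : z' ∉ V0 := by
    intro h
    apply hne
    congr 1
    rcases h with rfl | rfl | rfl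
    · exact p0_mem (hmem _ m01 (left_mem_segment _ _ _)) (hmem _ m02 (left_mem_segment _ _ _))
    · exact p1_mem (hmem _ m01 (right_mem_segment _ _ _)) (hmem _ m12 (left_mem_segment _ _ _))
    · exact p2_mem (hmem _ m02 (right_mem_segment _ _ _)) (hmem _ m12 (right_mem_segment _ _ _))
  rcases Dtri_cases hz' with hi | ⟨e, he, hze⟩
  · have hi' : z'' ∈ Do := by
      rcases Dtri_cases hz'' with h | ⟨e, he, hze⟩
      · exact h
      exfalso
      by_cases hv : z'' ∈ V0
      · exact Set.disjoint_left.1 (T.disj_vert_int i) (mem_iUnion.2 ⟨i, z'', hv, rfl⟩)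
          ⟨z', hi, hz.symm⟩
      · exact Set.disjoint_left.1 (T.disj_int_edge i i e he) ⟨z', hi, rfl⟩ ⟨z'', ⟨hze, hv⟩, hz⟩
    have : z'' = z' := T.inj_int i hi' hi hz
    exact ⟨x', hx', rfl, by rw [this]⟩
  · have hv' : ∀ y, T.σ i y = T.σ i z' → y ∉ V0 := fun y hy hv =>
      Set.disjoint_left.1 (T.disj_vert_edge i e he) (mem_iUnion.2 ⟨i, y, hv, rfl⟩)
        ⟨z', ⟨hze, hV⟩, hy.symm⟩
    rcases Dtri_cases hz'' with h | ⟨e', he', hze'⟩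
    · exact (Set.disjoint_left.1 (T.disj_int_edge i i e he) ⟨z'', h, hz⟩ ⟨z', ⟨hze, hV⟩, rfl⟩).elim
    have heq : T.σ i '' eo e = T.σ i '' eo e' := by
      rcases T.edge_eq_or_disjoint i i e he e' he' with h | h
      · exact h
      · exact (Set.disjoint_left.1 h ⟨z', ⟨hze, hV⟩, rfl⟩ ⟨z'', ⟨hze', hv' _ hz⟩, hz⟩).elim
    obtain ⟨A, hA, hσ⟩ := T.glue i i e he e' he' heq
    have hxe := hmem e he hze
    have hAz : A z' = z'' := by
      apply T.inj_edge i e' he'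
      · exact ⟨hA ▸ mem_image_of_mem A hze, hv' _ (hσ _ hze)⟩
      · exact ⟨hze', hv' _ hz⟩
      · rw [hσ _ hze, hz]
    refine ⟨A x', edge_sub he' (hA ▸ mem_image_of_mem A hxe), hσ _ hxe, ?_⟩
    rw [← hAz]
    refine dD_isom _ he he' ?_ A hA hxe hze
    unfold lRes
    congr 1
    rw [← hA, image_image]
    exact image_congr fun y hy => (hσ y hy).symm

/-- if `x, z, w ∈ σᵢ(D)` and `dᵢ(x,z) < r(x)`, then
`dᵢ(x,z) + dᵢ(z,w) ≥ dᵢ(x,w)`. -/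
theorem dTri_triangle_of_lt_rS
    {S : Type} [TopologicalSpace S] [CompactSpace S] [T2Space S] [ConnectedSpace S]
    {n : ℕ} (T : Triangulation S n) (l : Set S → ℝ) (hl : TriIneqT T l)
    (i : Fin n) (x z w : S)
    (hx : x ∈ T.σ i '' Dtri) (hz : z ∈ T.σ i '' Dtri) (hw : w ∈ T.σ i '' Dtri)
    (hlt : dTri T l i x z < rS T l x) :
    dTri T l i x z + dTri T l i z w ≥ dTri T l i x w := by
  by_cases hxz : x = z
  · subst hxz
    linarith [dTri_nonneg T l i x x]
  refine le_of_forall_pos_lt_add fun ε hε => ?_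
  obtain ⟨x', hx', z', hz', rfl, rfl, h1⟩ := dTri_approx T l i hx hz
    (lt_min hlt (lt_add_of_pos_right _ (half_pos hε)))
  obtain ⟨z'', hz'', w', hw', h2, rfl, h3⟩ := dTri_approx T l i hz hw
    (lt_add_of_pos_right _ (half_pos hε))
  obtain ⟨h4, h5⟩ := lt_min_iff.1 h1
  obtain ⟨x'', hx'', h6, h7⟩ := lift_pt T l i hx' hz' hz'' h2 hxz h4
  have h8 := dTri_le T l i hx'' hw'
  rw [h6] at h8
  have h9 := dD_triangle (lRes T l i) x'' z'' w'
  linarith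
end
end
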